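/- Let T be an optimal k-ary search tree on n nodes for the finite uniform workload, i.e., one minimizing the total distance Σ_{u≠v} d_T(u,v) over all k-ary search trees on n nodes. Then every subtree S of T with |V(S)| ≤ |V(T)|/(9k) is a weakly-complete k-ary tree. -/

import Mathlib

/-!
A node's key is unrelated to the ranges of its children's subtrees, so every rooted tree with at
most `k` children per node becomes a search tree under a preorder relabelling
(`exists_relabel`).  Optimality is therefore a statement about unlabelled shapes.

Counting, for each edge, the ordered pairs it separates shows that the total distance of a tree
with `n` nodes is `2 * cost n t`, where `cost n t` is the sum over all subtrees `w` of
`|w| * (n - |w|)` (`totalDistUniform_eq`).  This functional is local: exchanging a subtree for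
another one of the same size and smaller cost makes the whole tree cheaper
(`exists_replace`, `IsOptimal.cost_le`).

By induction on size it suffices to treat a subtree `S` all of whose children are weakly complete.
Let `h` be its height and suppose that some level `d < h` is not full.  Removing a deepest leaf of
`S` saves `Σ (n + 1 - 2|w|)` over the `h + 1` subtrees `w` on the path to that leaf
(`exists_remove`), and a new leaf can be attached at depth at most `d ≤ h - 1` for a price of at
most `h * (n - 1)` (`exists_add`).  The sizes along the path are bounded by `2 k ^ j` for height
`j`, hence their sum is at most `|S| + 4 k ^ (h - 1)`; and a child of height `h - 1` is weakly
complete, so that `k ^ (h - 2) < |S|`.  As `n ≥ 9 k |S|`, the move strictly lowers the cost,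
contradicting optimality.
-/

inductive KTree : Type where
  | node : ℕ → List KTree → KTree

namespace KTree

instance : Inhabited KTree := ⟨node 0 []⟩

def rootKey : KTree → ℕ
  | node x _ => x

def children : KTree → List KTree
  | node _ cs => cs

def keys : KTree → List ℕ
  | node x cs => x :: (cs.attach.map (fun c => c.1.keys)).flatten
decreasing_by
  have := List.sizeOf_lt_of_mem c.2
  simp only [KTree.node.sizeOf_spec]
  omega

def size (t : KTree) : ℕ := t.keys.length

def height : KTree → ℕ
  | node _ cs => (cs.attach.map (fun c => c.1.height + 1)).foldr max 0
decreasing_by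
  have := List.sizeOf_lt_of_mem c.2
  simp only [KTree.node.sizeOf_spec]
  omega

def countAt : KTree → ℕ → ℕ
  | node _ _, 0 => 1
  | node _ cs, d + 1 => ((cs.attach.map (fun c => c.1.countAt d)).foldr (· + ·) 0)

def countsAt : KTree → ℕ → List ℕ
  | node _ cs, 0 => [cs.length]
  | node _ cs, d + 1 => (cs.attach.map (fun c => c.1.countsAt d)).flatten

def edges : KTree → List (ℕ × ℕ)
  | node x cs => (cs.map fun c => (x, c.rootKey)) ++ (cs.attach.map (fun c => c.1.edges)).flatten
decreasing_by
  have := List.sizeOf_lt_of_mem c.2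
  simp only [KTree.node.sizeOf_spec]
  omega

def graph (t : KTree) : SimpleGraph ℕ :=
  SimpleGraph.fromRel (fun a b => (a, b) ∈ t.edges)

noncomputable def dist (t : KTree) (u v : ℕ) : ℕ := t.graph.dist u v

noncomputable def totalDist (t : KTree) (D : ℕ → ℕ → ℕ) : ℕ :=
  ∑ u ∈ t.keys.toFinset, ∑ v ∈ t.keys.toFinset, t.dist u v * D u v

noncomputable def totalDistUniform (t : KTree) : ℕ :=
  ∑ u ∈ t.keys.toFinset, ∑ v ∈ t.keys.toFinset, t.dist u v

def DegLE (k : ℕ) : KTree → Prop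
  | node _ cs => cs.length ≤ k ∧ ∀ c ∈ cs, DegLE k c

def Separated : KTree → Prop
  | node _ cs =>
      (cs.Pairwise fun a b =>
        (∀ u ∈ a.keys, ∀ v ∈ b.keys, u < v) ∨ (∀ u ∈ a.keys, ∀ v ∈ b.keys, v < u)) ∧
      ∀ c ∈ cs, Separated c

def IsKAST (k i j : ℕ) (t : KTree) : Prop :=
  t.DegLE k ∧ t.Separated ∧ t.keys.Nodup ∧ ∀ m, m ∈ t.keys ↔ m ∈ Finset.Icc i j

def WeaklyComplete (k : ℕ) (t : KTree) : Prop :=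
  t.DegLE k ∧ ∀ d, d < t.height → t.countAt d = k ^ d

def subtreeAt : KTree → List ℕ → Option KTree
  | t, [] => some t
  | node _ cs, i :: is =>
    match cs[i]? with
    | some c => subtreeAt c is
    | none => none

def replaceAt : KTree → List ℕ → KTree → KTree
  | _, [], r => r
  | node x cs, i :: is, r => node x (cs.set i (replaceAt (cs.getD i default) is r))

def attachLeaf : KTree → List ℕ → ℕ → KTree
  | node x cs, [], u => node x (cs ++ [node u []])
  | node x cs, i :: is, u => node x (cs.set i (attachLeaf (cs.getD i default) is u))

def IsSubtreeOf (s t : KTree) : Prop := ∃ pos, subtreeAt t pos = some s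

def graphAvoiding (t : KTree) (c : ℕ) : SimpleGraph ℕ :=
  SimpleGraph.fromRel (fun a b => (a, b) ∈ t.edges ∧ a ≠ c ∧ b ≠ c)

def IsCentroid (t : KTree) (c : ℕ) : Prop :=
  c ∈ t.keys ∧ ∀ w ∈ t.keys, w ≠ c →
    2 * {w' | w' ∈ t.keys ∧ (t.graphAvoiding c).Reachable w w'}.ncard ≤ t.size

def uniformDemand : ℕ → ℕ → ℕ := fun u v => if u = v then 0 else 1

def IsOptimal (k n : ℕ) (T : KTree) : Prop :=
  IsKAST k 1 n T ∧ ∀ T' : KTree, IsKAST k 1 n T' → totalDistUniform T ≤ totalDistUniform T'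

def truncate : ℕ → KTree → KTree
  | 0, node x _ => node x []
  | d + 1, node x cs => node x (cs.attach.map (fun c => truncate d c.1))

def LastLevelPartial (k : ℕ) (t : KTree) : Prop :=
  1 ≤ t.height ∧ 0 < t.countAt t.height ∧ t.countAt t.height < k * t.countAt (t.height - 1)

def Packed (k : ℕ) (t : KTree) : Prop :=
  ∀ i j : ℕ, i < j → 0 < (t.countsAt (t.height - 1)).getD j 0 →
    (t.countsAt (t.height - 1)).getD i 0 = k

def Reorder : KTree → KTree → Prop
  | node x cs, node y ds =>
      x = y ∧ ∃ e : Fin cs.length ≃ Fin ds.length,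
        ∀ i : Fin cs.length, Reorder cs[i] ds[e i]
termination_by t _ => sizeOf t
decreasing_by
  have h1 : cs[i] ∈ cs := List.getElem_mem _
  have := List.sizeOf_lt_of_mem h1
  simp only [KTree.node.sizeOf_spec]
  omega

def IsQuasiOptimal (k n : ℕ) (t : KTree) : Prop :=
  t.keys.Nodup ∧ (∀ m, m ∈ t.keys ↔ m ∈ Finset.Icc 1 n) ∧
  t.children.length = k + 1 ∧
  (∀ c ∈ t.children, WeaklyComplete k c) ∧
  (∀ d, 0 < d → d < t.height → t.countAt d = (k + 1) * k ^ (d - 1)) ∧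
  Packed k t

end KTree

open KTree

namespace KTree

/-! ### Recursion equations -/

theorem ind {P : KTree → Prop} (h : ∀ x cs, (∀ c ∈ cs, P c) → P (node x cs)) : ∀ t, P t
  | node x cs => h x cs (fun c _ => ind h c)

theorem keys_node (x : ℕ) (cs : List KTree) :
    (node x cs).keys = x :: (cs.map keys).flatten := by
  rw [keys]; simp

theorem size_node (x : ℕ) (cs : List KTree) :
    (node x cs).size = 1 + (cs.map size).sum := by
  simp only [size, keys_node, List.length_cons, List.length_flatten, List.map_map]
  rw [add_comm]; rfl

theorem height_node (x : ℕ) (cs : List KTree) :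
    (node x cs).height = (cs.map (fun c => c.height + 1)).foldr max 0 := by
  rw [height]; simp

theorem countAt_zero (t : KTree) : t.countAt 0 = 1 := by
  cases t; rw [countAt]

theorem countAt_succ (x : ℕ) (cs : List KTree) (d : ℕ) :
    (node x cs).countAt (d + 1) = (cs.map (fun c => c.countAt d)).sum := by
  rw [countAt, List.sum]; simp

theorem degLE_node {k x : ℕ} {cs : List KTree} :
    (node x cs).DegLE k ↔ cs.length ≤ k ∧ ∀ c ∈ cs, DegLE k c := by
  rw [DegLE]

theorem separated_node {x : ℕ} {cs : List KTree} :
    (node x cs).Separated ↔ (cs.Pairwise fun a b =>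
        (∀ u ∈ a.keys, ∀ v ∈ b.keys, u < v) ∨ (∀ u ∈ a.keys, ∀ v ∈ b.keys, v < u)) ∧
      ∀ c ∈ cs, Separated c := by
  rw [Separated]

theorem mem_edges_node {x : ℕ} {cs : List KTree} {e : ℕ × ℕ} :
    e ∈ (node x cs).edges ↔ (∃ c ∈ cs, e = (x, c.rootKey)) ∨ ∃ c ∈ cs, e ∈ c.edges := by
  rw [edges]; simp [eq_comm]

theorem mem_keys_node {x : ℕ} {cs : List KTree} {u : ℕ} :
    u ∈ (node x cs).keys ↔ u = x ∨ ∃ c ∈ cs, u ∈ c.keys := by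
  simp [keys_node]

theorem rootKey_mem (t : KTree) : t.rootKey ∈ t.keys := by
  cases t; simp [keys_node, rootKey]

theorem size_pos (t : KTree) : 0 < t.size := by
  cases t; rw [size_node]; omega

theorem nodup_node {x : ℕ} {cs : List KTree} :
    (node x cs).keys.Nodup ↔ (∀ c ∈ cs, x ∉ c.keys) ∧ (∀ c ∈ cs, c.keys.Nodup) ∧
      cs.Pairwise (fun a b => List.Disjoint a.keys b.keys) := by
  rw [keys_node, List.nodup_cons, List.nodup_flatten, List.pairwise_map]
  simp

/-! ### The cost of a tree as a sum over its subtrees -/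

/-- The sum over all subtrees `w` of `t` of `|w| * (n - |w|)`.  When `t` has `n` nodes this is
half of its total distance; the root then contributes `0`. -/
def cost (n : ℤ) : KTree → ℤ
  | node x cs => ((node x cs).size : ℤ) * (n - (node x cs).size)
      + (cs.map (fun c => cost n c)).sum

theorem cost_node (n : ℤ) (x : ℕ) (cs : List KTree) :
    cost n (node x cs) = ((node x cs).size : ℤ) * (n - (node x cs).size)
      + (cs.map (cost n)).sum := by
  rw [cost]

/-- The number of subtrees of `t` (including `t`) containing exactly one of `u`, `v`.  For two
keys of `t` this is the number of edges separating them. -/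
def sep (u v : ℕ) : KTree → ℕ
  | node x cs => (if (u ∈ (node x cs).keys) ↔ (v ∈ (node x cs).keys) then 0 else 1)
      + (cs.map (fun c => sep u v c)).sum

theorem sep_node (u v x : ℕ) (cs : List KTree) :
    sep u v (node x cs) = (if (u ∈ (node x cs).keys) ↔ (v ∈ (node x cs).keys) then 0 else 1)
      + (cs.map (sep u v)).sum := by
  rw [sep]

theorem sep_comm (u v : ℕ) (t : KTree) : sep u v t = sep v u t := by
  induction t using ind with
  | h x cs ih =>
    rw [sep_node, sep_node, List.map_congr_left ih]
    simp only [iff_comm]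

theorem sep_eq_zero {u v : ℕ} (t : KTree) (hu : u ∉ t.keys) (hv : v ∉ t.keys) :
    sep u v t = 0 := by
  induction t using ind with
  | h x cs ih =>
    rw [sep_node, if_pos (by tauto), zero_add]
    rw [List.sum_eq_zero]
    intro y hy
    obtain ⟨c, hc, rfl⟩ := List.mem_map.1 hy
    exact ih c hc (fun h => hu (mem_keys_node.2 (Or.inr ⟨c, hc, h⟩)))
      (fun h => hv (mem_keys_node.2 (Or.inr ⟨c, hc, h⟩)))

theorem sep_self (u : ℕ) (t : KTree) : sep u u t = 0 := by
  induction t using ind with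
  | h x cs ih =>
    rw [sep_node, if_pos Iff.rfl, zero_add, List.sum_eq_zero]
    intro y hy
    obtain ⟨c, hc, rfl⟩ := List.mem_map.1 hy
    exact ih c hc

theorem sep_triangle (u v w : ℕ) (t : KTree) : sep u w t ≤ sep u v t + sep v w t := by
  induction t using ind with
  | h x cs ih =>
    rw [sep_node, sep_node, sep_node]
    have h1 : (cs.map (sep u w)).sum ≤ (cs.map (sep u v)).sum + (cs.map (sep v w)).sum := by
      rw [← List.sum_map_add]
      exact List.sum_le_sum ih
    have h2 : (if (u ∈ (node x cs).keys) ↔ (w ∈ (node x cs).keys) then 0 else 1) ≤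
        (if (u ∈ (node x cs).keys) ↔ (v ∈ (node x cs).keys) then 0 else 1) +
        (if (v ∈ (node x cs).keys) ↔ (w ∈ (node x cs).keys) then 0 else 1) := by
      by_cases a : u ∈ (node x cs).keys <;> by_cases b : v ∈ (node x cs).keys <;>
        by_cases c : w ∈ (node x cs).keys <;> simp [a, b, c]
    omega

/-- Only one child of a node contributes to `sep u v` when both keys avoid the other children. -/
theorem sep_sum_eq {u v : ℕ} {l₁ l₂ : List KTree} {c : KTree}
    (hu : ∀ c' ∈ l₁ ++ l₂, u ∉ c'.keys) (hv : ∀ c' ∈ l₁ ++ l₂, v ∉ c'.keys) :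
    ((l₁ ++ c :: l₂).map (sep u v)).sum = sep u v c := by
  have h : ∀ l : List KTree, (∀ c' ∈ l, c' ∈ l₁ ++ l₂) → (l.map (sep u v)).sum = 0 := by
    intro l hl
    refine List.sum_eq_zero ?_
    intro y hy
    obtain ⟨c, hc, rfl⟩ := List.mem_map.1 hy
    exact sep_eq_zero c (hu c (hl c hc)) (hv c (hl c hc))
  rw [List.map_append, List.sum_append, List.map_cons, List.sum_cons,
    h l₁ (fun c' hc' => List.mem_append_left _ hc'),
    h l₂ (fun c' hc' => List.mem_append_right _ hc')]
  omega

theorem mem_keys_of_mem_edges {a b : ℕ} (t : KTree) (h : (a, b) ∈ t.edges) :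
    a ∈ t.keys ∧ b ∈ t.keys := by
  induction t using ind with
  | h x cs ih =>
    rcases mem_edges_node.1 h with ⟨c, hc, he⟩ | ⟨c, hc, he⟩
    · simp only [Prod.mk.injEq] at he
      obtain ⟨rfl, rfl⟩ := he
      exact ⟨mem_keys_node.2 (Or.inl rfl), mem_keys_node.2 (Or.inr ⟨c, hc, rootKey_mem c⟩)⟩
    · exact ⟨mem_keys_node.2 (Or.inr ⟨c, hc, (ih c hc he).1⟩),
        mem_keys_node.2 (Or.inr ⟨c, hc, (ih c hc he).2⟩)⟩

theorem disjoint_of_split {l₁ l₂ : List KTree} {c : KTree}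
    (h : (l₁ ++ c :: l₂).Pairwise (fun a b => List.Disjoint a.keys b.keys))
    {u : ℕ} (hu : u ∈ c.keys) : ∀ c' ∈ l₁ ++ l₂, u ∉ c'.keys := by
  rw [List.pairwise_append, List.pairwise_cons] at h
  intro c' hc' hu'
  rcases List.mem_append.1 hc' with h1 | h1
  · exact h.2.2 c' h1 c (by simp) hu' hu
  · exact h.2.1.1 c' h1 hu hu'

/-- The two ends of an edge are separated by that edge only. -/
theorem sep_le_one_of_edge {a b : ℕ} (t : KTree) (hnd : t.keys.Nodup) (h : (a, b) ∈ t.edges) :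
    sep a b t ≤ 1 := by
  induction t using ind with
  | h x cs ih =>
    have hk := mem_keys_of_mem_edges _ h
    obtain ⟨hx, hcs, hp⟩ := nodup_node.1 hnd
    rw [sep_node, if_pos (by tauto), zero_add]
    rcases mem_edges_node.1 h with ⟨c, hc, he⟩ | ⟨c, hc, he⟩
    · simp only [Prod.mk.injEq] at he
      obtain ⟨rfl, rfl⟩ := he
      obtain ⟨l₁, l₂, rfl⟩ := List.append_of_mem hc
      rw [sep_sum_eq (fun c' hc' => hx c' (by
        rcases List.mem_append.1 hc' with h | h <;> simp [h]))
        (disjoint_of_split hp (rootKey_mem c))]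
      have hxc := hx c hc
      have hndc := hcs c hc
      cases c with
      | node y ds =>
        obtain ⟨hy, -, -⟩ := nodup_node.1 hndc
        rw [sep_node, rootKey]
        have : (ds.map (sep a y)).sum = 0 := by
          refine List.sum_eq_zero ?_
          intro z hz
          obtain ⟨c, hc, rfl⟩ := List.mem_map.1 hz
          exact sep_eq_zero c (fun h => hxc (mem_keys_node.2 (Or.inr ⟨c, hc, h⟩))) (hy c hc)
        rw [this]
        split_ifs <;> simp
    · have hkc := mem_keys_of_mem_edges _ he
      have := ih c hc (hcs c hc) he
      obtain ⟨l₁, l₂, rfl⟩ := List.append_of_mem hc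
      rwa [sep_sum_eq (disjoint_of_split hp hkc.1) (disjoint_of_split hp hkc.2)]

theorem sep_le_length {t : KTree} (hnd : t.keys.Nodup) {u v : ℕ} (p : t.graph.Walk u v) :
    sep u v t ≤ p.length := by
  induction p with
  | nil => simp [sep_self]
  | @cons u w v h p ih =>
    have h1 : sep u w t ≤ 1 := by
      rw [graph, SimpleGraph.fromRel_adj] at h
      rcases h.2 with h | h
      · exact sep_le_one_of_edge t hnd h
      · rw [sep_comm]; exact sep_le_one_of_edge t hnd h
    have := sep_triangle u w v t
    rw [SimpleGraph.Walk.length_cons]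
    omega

theorem sep_le_of_mem {u v x : ℕ} {cs : List KTree} {c : KTree} (hc : c ∈ cs) :
    sep u v c ≤ sep u v (node x cs) := by
  rw [sep_node]
  have := List.single_le_sum (l := cs.map (sep u v)) (by simp) _ (List.mem_map_of_mem hc)
  omega

/-- For a key `r` outside `t`, the number `sep r u t` dominates one plus the depth of `u`. -/
theorem exists_walk_root (G : SimpleGraph ℕ) {r u : ℕ} (t : KTree)
    (hG : ∀ a b, (a, b) ∈ t.edges → G.Adj a b) (hr : r ∉ t.keys) (hu : u ∈ t.keys) :
    ∃ p : G.Walk t.rootKey u, p.length + 1 ≤ sep r u t := by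
  induction t using ind with
  | h x cs ih =>
    rw [sep_node, if_neg (by tauto), rootKey]
    rcases mem_keys_node.1 hu with rfl | ⟨c, hc, huc⟩
    · exact ⟨SimpleGraph.Walk.nil, by simp⟩
    · obtain ⟨p, hp⟩ := ih c hc (fun a b h => hG a b (mem_edges_node.2 (Or.inr ⟨c, hc, h⟩)))
        (fun h => hr (mem_keys_node.2 (Or.inr ⟨c, hc, h⟩))) huc
      have hadj : G.Adj x c.rootKey := hG _ _ (mem_edges_node.2 (Or.inl ⟨c, hc, rfl⟩))
      refine ⟨SimpleGraph.Walk.cons hadj p, ?_⟩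
      have := List.single_le_sum (l := cs.map (sep r u)) (by simp) _ (List.mem_map_of_mem hc)
      rw [SimpleGraph.Walk.length_cons]
      omega

theorem exists_walk (G : SimpleGraph ℕ) {u v : ℕ} (t : KTree) (hnd : t.keys.Nodup)
    (hG : ∀ a b, (a, b) ∈ t.edges → G.Adj a b) (hu : u ∈ t.keys) (hv : v ∈ t.keys) :
    ∃ p : G.Walk u v, p.length ≤ sep u v t := by
  induction t using ind with
  | h x cs ih =>
    obtain ⟨hx, hcs, hp⟩ := nodup_node.1 hnd
    have hGc : ∀ c ∈ cs, ∀ a b, (a, b) ∈ c.edges → G.Adj a b :=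
      fun c hc a b h => hG a b (mem_edges_node.2 (Or.inr ⟨c, hc, h⟩))
    have hadj : ∀ c ∈ cs, G.Adj x c.rootKey :=
      fun c hc => hG _ _ (mem_edges_node.2 (Or.inl ⟨c, hc, rfl⟩))
    -- a walk from the root `x` into a child, measured by a key `r` outside that child
    have key : ∀ c ∈ cs, ∀ r, r ∉ c.keys → ∀ w ∈ c.keys,
        ∃ p : G.Walk x w, p.length ≤ sep r w c := by
      intro c hc r hr w hw
      obtain ⟨p, hp⟩ := exists_walk_root G c (hGc c hc) hr hw
      exact ⟨SimpleGraph.Walk.cons (hadj c hc) p, by rwa [SimpleGraph.Walk.length_cons]⟩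
    rcases mem_keys_node.1 hu with rfl | ⟨c, hc, huc⟩
    · rcases mem_keys_node.1 hv with rfl | ⟨c', hc', hvc'⟩
      · exact ⟨SimpleGraph.Walk.nil, by simp⟩
      · obtain ⟨p, hp⟩ := key c' hc' u (hx c' hc') v hvc'
        exact ⟨p, hp.trans (sep_le_of_mem hc')⟩
    · rcases mem_keys_node.1 hv with rfl | ⟨c', hc', hvc'⟩
      · obtain ⟨p, hp⟩ := key c hc v (hx c hc) u huc
        refine ⟨p.reverse, ?_⟩
        rw [SimpleGraph.Walk.length_reverse, sep_comm]
        exact hp.trans (sep_le_of_mem hc)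
      · by_cases hvc : v ∈ c.keys
        · obtain ⟨p, hp⟩ := ih c hc (hcs c hc) (hGc c hc) huc hvc
          exact ⟨p, hp.trans (sep_le_of_mem hc)⟩
        · obtain ⟨l₁, l₂, rfl⟩ := List.append_of_mem hc
          have huc' : c' ∈ l₁ ++ l₂ := by
            rcases List.mem_append.1 hc' with h | h
            · exact List.mem_append_left _ h
            · rcases List.mem_cons.1 h with rfl | h
              · exact absurd hvc' hvc
              · exact List.mem_append_right _ h
          obtain ⟨p, hp1⟩ := key c hc v hvc u huc
          obtain ⟨q, hq1⟩ := key c' hc' u (disjoint_of_split hp huc c' huc') v hvc'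
          refine ⟨p.reverse.append q, ?_⟩
          rw [SimpleGraph.Walk.length_append, SimpleGraph.Walk.length_reverse, sep_node]
          rw [sep_comm] at hp1
          have := List.single_le_sum (l := (l₁ ++ l₂).map (sep u v)) (by simp) _
            (List.mem_map_of_mem huc')
          simp only [List.map_append, List.sum_append, List.map_cons, List.sum_cons] at this ⊢
          omega

theorem dist_eq_sep {t : KTree} (hnd : t.keys.Nodup) {u v : ℕ} (hu : u ∈ t.keys)
    (hv : v ∈ t.keys) : t.dist u v = sep u v t := by
  have hG : ∀ a b, (a, b) ∈ t.edges → t.graph.Adj a b := by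
    intro a b h
    rw [graph, SimpleGraph.fromRel_adj]
    refine ⟨?_, Or.inl h⟩
    rintro rfl
    -- a loop would identify the root of some subtree with the root of one of its children
    revert h hnd
    clear hu hv
    induction t using ind with
    | h x cs ih =>
      intro hnd h
      obtain ⟨hx, hcs, -⟩ := nodup_node.1 hnd
      rcases mem_edges_node.1 h with ⟨c, hc, he⟩ | ⟨c, hc, he⟩
      · simp only [Prod.mk.injEq] at he
        exact hx c hc (by rw [← he.1, he.2]; exact rootKey_mem c)
      · exact ih c hc (hcs c hc) he
  obtain ⟨p, hp⟩ := exists_walk t.graph t hnd hG hu hv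
  apply le_antisymm
  · exact (SimpleGraph.dist_le p).trans hp
  · obtain ⟨q, hq⟩ := SimpleGraph.Reachable.exists_walk_length_eq_dist ⟨p⟩
    rw [dist, ← hq]
    exact sep_le_length hnd q

theorem sum_list_sum {ι : Type*} (s : Finset ι) (l : List KTree) (f : ι → KTree → ℤ) :
    ∑ i ∈ s, (l.map (f i)).sum = (l.map (fun c => ∑ i ∈ s, f i c)).sum := by
  induction l with
  | nil => simp
  | cons a l ih => simp [Finset.sum_add_distrib, ih]

/-- Among the ordered pairs of elements of `K`, exactly `2 |A| (|K| - |A|)` are separated by a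
subset `A`. -/
theorem sum_cut (K A : Finset ℕ) (h : A ⊆ K) :
    ∑ u ∈ K, ∑ v ∈ K, (if (u ∈ A) ↔ (v ∈ A) then (0 : ℤ) else 1)
      = 2 * (A.card * (K.card - A.card)) := by
  have e : ∀ u v : ℕ, (if (u ∈ A) ↔ (v ∈ A) then (0 : ℤ) else 1)
      = (if u ∈ A then 1 else 0) * (1 - if v ∈ A then 1 else 0)
        + (1 - if u ∈ A then 1 else 0) * (if v ∈ A then 1 else 0) := by
    intro u v
    by_cases a : u ∈ A <;> by_cases b : v ∈ A <;> simp [a, b]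
  have hc : ∑ u ∈ K, (if u ∈ A then (1 : ℤ) else 0) = A.card := by
    rw [Finset.sum_boole, Finset.filter_mem_eq_inter, Finset.inter_eq_right.2 h]
  simp only [e, Finset.sum_add_distrib, ← Finset.mul_sum, ← Finset.sum_mul,
    Finset.sum_sub_distrib, hc, Finset.sum_const, nsmul_eq_mul, mul_one]
  ring

theorem sum_sep (K : Finset ℕ) (t : KTree) (hnd : t.keys.Nodup) (hK : t.keys.toFinset ⊆ K) :
    ∑ u ∈ K, ∑ v ∈ K, (sep u v t : ℤ) = 2 * cost K.card t := by
  induction t using ind with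
  | h x cs ih =>
    obtain ⟨-, hcs, -⟩ := nodup_node.1 hnd
    have hsz : ((node x cs).keys.toFinset.card : ℤ) = (node x cs).size := by
      rw [List.toFinset_card_of_nodup hnd, size]
    have h1 : ∀ u v, (sep u v (node x cs) : ℤ)
        = (if (u ∈ (node x cs).keys.toFinset) ↔ (v ∈ (node x cs).keys.toFinset)
            then (0 : ℤ) else 1) + (cs.map (fun c => (sep u v c : ℤ))).sum := by
      intro u v
      rw [sep_node]
      push_cast
      simp only [List.mem_toFinset, List.map_map]
      rfl
    simp only [h1, Finset.sum_add_distrib, sum_cut K _ hK, hsz]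
    simp only [sum_list_sum]
    rw [cost_node, mul_add, ← List.sum_map_mul_left]
    congr 2
    refine List.map_congr_left fun c hc => ih c hc (hcs c hc) fun y hy => hK ?_
    rw [List.mem_toFinset] at hy ⊢
    exact mem_keys_node.2 (Or.inr ⟨c, hc, hy⟩)

theorem totalDistUniform_eq {t : KTree} (hnd : t.keys.Nodup) :
    (totalDistUniform t : ℤ) = 2 * cost t.size t := by
  have := sum_sep t.keys.toFinset t hnd subset_rfl
  rw [List.toFinset_card_of_nodup hnd] at this
  rw [size, ← this, totalDistUniform]
  push_cast
  refine Finset.sum_congr rfl fun u hu => Finset.sum_congr rfl fun v hv => ?_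
  rw [dist_eq_sep hnd (List.mem_toFinset.1 hu) (List.mem_toFinset.1 hv)]

/-! ### Realising shapes as search trees -/

/-- Numbering the nodes in preorder from `a` makes any tree a search tree. -/
theorem exists_relabel (k : ℕ) (n : ℤ) (t : KTree) (ht : t.DegLE k) : ∀ a : ℕ,
    ∃ t' : KTree, t'.DegLE k ∧ t'.Separated ∧ t'.keys = List.range' a t.size ∧
      cost n t' = cost n t := by
  induction t using ind with
  | h x cs ih =>
    intro a
    obtain ⟨hl, hc⟩ := degLE_node.1 ht
    have key : ∀ (l : List KTree) (b : ℕ), (∀ c ∈ l, c ∈ cs) →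
        ∃ l' : List KTree, l'.length = l.length ∧ (∀ c ∈ l', c.DegLE k) ∧
          (∀ c ∈ l', c.Separated) ∧
          l'.Pairwise (fun a b => ∀ u ∈ a.keys, ∀ v ∈ b.keys, u < v) ∧
          (l'.map keys).flatten = List.range' b (l.map size).sum ∧
          (l'.map (cost n)).sum = (l.map (cost n)).sum := by
      intro l
      induction l with
      | nil => intro b _; exact ⟨[], by simp⟩
      | cons c l ihl =>
        intro b hb
        have hcc := hb c (by simp)
        obtain ⟨c', h1, h2, h3, h4⟩ := ih c hcc (hc c hcc) b
        obtain ⟨l', g1, g2, g3, g4, g5, g6⟩ :=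
          ihl (b + c.size) (fun c hc => hb c (by simp [hc]))
        refine ⟨c' :: l', by simp [g1], ?_, ?_, ?_, ?_, by simp [h4, g6]⟩
        · simpa [h1] using g2
        · simpa [h2] using g3
        · refine List.pairwise_cons.2 ⟨?_, g4⟩
          intro d hd u hu v hv
          have hv' : v ∈ (l'.map keys).flatten :=
            List.mem_flatten.2 ⟨_, List.mem_map_of_mem hd, hv⟩
          rw [g5, List.mem_range'_1] at hv'
          rw [h3, List.mem_range'_1] at hu
          omega
        · simp [h3, g5, List.range'_append_1]
    obtain ⟨l', g1, g2, g3, g4, g5, g6⟩ := key cs (a + 1) (fun _ h => h)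
    have hkeys : (node a l').keys = List.range' a (node x cs).size := by
      rw [keys_node, g5, size_node, add_comm 1, List.range'_succ]
    refine ⟨node a l', degLE_node.2 ⟨by omega, g2⟩,
      separated_node.2 ⟨g4.imp (fun h => Or.inl h), g3⟩, hkeys, ?_⟩
    rw [cost_node, cost_node, g6, size, hkeys, List.length_range']

theorem IsKAST.size_eq {k n : ℕ} {T : KTree} (h : IsKAST k 1 n T) : T.size = n := by
  obtain ⟨-, -, hnd, hm⟩ := h
  rw [size, ← List.toFinset_card_of_nodup hnd]
  have : T.keys.toFinset = Finset.Icc 1 n := by ext m; rw [List.mem_toFinset, hm]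
  rw [this]; simp

/-- An optimal search tree has minimal cost among all shapes of the same size. -/
theorem IsOptimal.cost_le {k n : ℕ} {T : KTree} (h : IsOptimal k n T) {T' : KTree}
    (hd : T'.DegLE k) (hs : T'.size = T.size) : cost T.size T ≤ cost T.size T' := by
  obtain ⟨T'', h1, h2, h3, h4⟩ := exists_relabel k T.size T' hd 1
  have hn := h.1.size_eq
  have hnd : T''.keys.Nodup := by rw [h3]; exact List.nodup_range'
  have hk : IsKAST k 1 n T'' := by
    refine ⟨h1, h2, hnd, fun m => ?_⟩
    rw [h3, List.mem_range'_1, Finset.mem_Icc]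
    omega
  have hle := h.2 T'' hk
  have e1 := totalDistUniform_eq h.1.2.2.1
  have e2 := totalDistUniform_eq hnd
  rw [hk.size_eq, ← hn, h4] at e2
  have : (totalDistUniform T : ℤ) ≤ totalDistUniform T'' := by exact_mod_cast hle
  linarith

/-! ### Exchanging subtrees -/

theorem subtreeAt_cons (x : ℕ) (cs : List KTree) (i : ℕ) (is : List ℕ) :
    subtreeAt (node x cs) (i :: is) = (cs[i]?).bind (fun c => subtreeAt c is) := by
  rw [subtreeAt]; cases cs[i]? <;> rfl

theorem isSubtreeOf_child {T : KTree} {x : ℕ} {cs : List KTree} (h : IsSubtreeOf (node x cs) T)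
    {c : KTree} (hc : c ∈ cs) : IsSubtreeOf c T := by
  obtain ⟨pos, hpos⟩ := h
  obtain ⟨i, hi⟩ := List.mem_iff_getElem?.1 hc
  refine ⟨pos ++ [i], ?_⟩
  induction pos generalizing T with
  | nil =>
    rw [subtreeAt] at hpos
    obtain rfl := Option.some.inj hpos
    rw [List.nil_append, subtreeAt_cons, hi]
    simp [subtreeAt]
  | cons j js ih =>
    cases T with
    | node y ds =>
      rw [subtreeAt_cons] at hpos
      obtain ⟨d, hd, hdj⟩ := Option.bind_eq_some_iff.1 hpos
      rw [List.cons_append, subtreeAt_cons, hd, Option.bind_some]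
      exact ih hdj

theorem degLE_of_isSubtreeOf {k : ℕ} {S T : KTree} (h : IsSubtreeOf S T) (hT : T.DegLE k) :
    S.DegLE k := by
  obtain ⟨pos, hpos⟩ := h
  induction pos generalizing T with
  | nil =>
    rw [subtreeAt] at hpos
    obtain rfl := Option.some.inj hpos
    exact hT
  | cons j js ih =>
    cases T with
    | node y ds =>
      rw [subtreeAt_cons] at hpos
      obtain ⟨d, hd, hdj⟩ := Option.bind_eq_some_iff.1 hpos
      exact ih ((degLE_node.1 hT).2 d (List.mem_of_getElem? hd)) hdj

theorem size_split (x : ℕ) (l₁ l₂ : List KTree) (c : KTree) :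
    (node x (l₁ ++ c :: l₂)).size = (node x (l₁ ++ l₂)).size + c.size := by
  simp only [size_node, List.map_append, List.map_cons, List.sum_append, List.sum_cons]
  omega

theorem cost_split (n : ℤ) (x : ℕ) (l₁ l₂ : List KTree) (c : KTree) :
    cost n (node x (l₁ ++ c :: l₂))
      = ((node x (l₁ ++ c :: l₂)).size : ℤ) * (n - (node x (l₁ ++ c :: l₂)).size)
        + cost n c + (((l₁ ++ l₂).map (cost n)).sum) := by
  rw [cost_node]
  simp only [List.map_append, List.map_cons, List.sum_append, List.sum_cons]
  ring

theorem degLE_split {k x : ℕ} {l₁ l₂ : List KTree} {c c' : KTree}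
    (h : (node x (l₁ ++ c :: l₂)).DegLE k) (hc : c'.DegLE k) :
    (node x (l₁ ++ c' :: l₂)).DegLE k := by
  rw [degLE_node] at h ⊢
  refine ⟨by simpa using h.1, fun d hd => ?_⟩
  rcases List.mem_append.1 hd with h1 | h1
  · exact h.2 d (by simp [h1])
  · rcases List.mem_cons.1 h1 with rfl | h1
    · exact hc
    · exact h.2 d (by simp [h1])

theorem exists_replace {k : ℕ} {n : ℤ} {S S' T : KTree} (h : IsSubtreeOf S T) (hT : T.DegLE k)
    (hS' : S'.DegLE k) (hs : S'.size = S.size) (hcost : cost n S' < cost n S) :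
    ∃ T' : KTree, T'.DegLE k ∧ T'.size = T.size ∧ cost n T' < cost n T := by
  obtain ⟨pos, hpos⟩ := h
  induction pos generalizing T with
  | nil =>
    rw [subtreeAt] at hpos
    obtain rfl := Option.some.inj hpos
    exact ⟨S', hS', hs, hcost⟩
  | cons j js ih =>
    cases T with
    | node y ds =>
      rw [subtreeAt_cons] at hpos
      obtain ⟨d, hd, hdj⟩ := Option.bind_eq_some_iff.1 hpos
      have hmem := List.mem_of_getElem? hd
      obtain ⟨d', h1, h2, h3⟩ := ih ((degLE_node.1 hT).2 d hmem) hdj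
      clear hd hpos
      obtain ⟨l₁, l₂, rfl⟩ := List.append_of_mem hmem
      have hsz : (node y (l₁ ++ d' :: l₂)).size = (node y (l₁ ++ d :: l₂)).size := by
        rw [size_split, size_split, h2]
      refine ⟨node y (l₁ ++ d' :: l₂), degLE_split hT h1, hsz, ?_⟩
      rw [cost_split, cost_split, hsz]
      linarith

/-! ### Heights and level sizes -/

theorem le_height {x : ℕ} {cs : List KTree} {c : KTree} (hc : c ∈ cs) :
    c.height + 1 ≤ (node x cs).height := by
  rw [height_node]
  induction cs with
  | nil => simp at hc
  | cons d ds ih =>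
    rw [List.map_cons, List.foldr_cons]
    rcases List.mem_cons.1 hc with rfl | h
    · exact le_max_left _ _
    · exact (ih h).trans (le_max_right _ _)

theorem exists_height {x h : ℕ} {cs : List KTree} (hh : (node x cs).height = h + 1) :
    ∃ c ∈ cs, c.height = h := by
  rw [height_node] at hh
  induction cs with
  | nil => simp at hh
  | cons d ds ih =>
    rw [List.map_cons, List.foldr_cons] at hh
    rcases max_choice (d.height + 1) ((ds.map (fun c => c.height + 1)).foldr max 0) with e | e
    · exact ⟨d, by simp, by omega⟩
    · obtain ⟨c, hc, hc'⟩ := ih (by omega)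
      exact ⟨c, by simp [hc], hc'⟩

theorem size_of_height_zero {t : KTree} (h : t.height = 0) : t.size = 1 := by
  cases t with
  | node x cs =>
    cases cs with
    | nil => simp [size_node]
    | cons c cs =>
      have := le_height (x := x) (List.mem_cons_self (a := c) (l := cs))
      omega

theorem sum_le_of_length {k b : ℕ} {cs : List KTree} (f : KTree → ℕ) (hl : cs.length ≤ k)
    (h : ∀ c ∈ cs, f c ≤ b) : (cs.map f).sum ≤ k * b := by
  have h1 : (cs.map f).sum ≤ (cs.map f).length • b :=
    List.sum_le_card_nsmul _ _ (by simpa using h)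
  rw [List.length_map, smul_eq_mul] at h1
  exact h1.trans (Nat.mul_le_mul_right b hl)

theorem countAt_le {k : ℕ} {t : KTree} (ht : t.DegLE k) : ∀ d, t.countAt d ≤ k ^ d := by
  induction t using ind with
  | h x cs ih =>
    intro d
    cases d with
    | zero => rw [countAt_zero]; simp
    | succ d =>
      obtain ⟨hl, hc⟩ := degLE_node.1 ht
      rw [countAt_succ, pow_succ, mul_comm]
      exact sum_le_of_length _ hl (fun c h => ih c h (hc c h) d)

theorem countAt_pos (t : KTree) : ∀ d ≤ t.height, 1 ≤ t.countAt d := by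
  induction t using ind with
  | h x cs ih =>
    intro d hd
    cases d with
    | zero => rw [countAt_zero]
    | succ d =>
      obtain ⟨c, hc, hch⟩ := exists_height (h := (node x cs).height - 1) (cs := cs) (x := x)
        (by omega)
      have h1 := ih c hc d (by omega)
      rw [countAt_succ]
      exact h1.trans (List.single_le_sum (l := cs.map (fun c => c.countAt d)) (by simp) _
        (List.mem_map_of_mem hc))

theorem countAt_le_size (t : KTree) : ∀ d, t.countAt d ≤ t.size := by
  induction t using ind with
  | h x cs ih =>
    intro d
    cases d with
    | zero => rw [countAt_zero]; exact size_pos _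
    | succ d =>
      rw [countAt_succ, size_node]
      have : (cs.map (fun c => c.countAt d)).sum ≤ (cs.map size).sum :=
        List.sum_le_sum (fun c hc => ih c hc d)
      omega

theorem size_le_pow {k : ℕ} (hk : 2 ≤ k) {t : KTree} (ht : t.DegLE k) :
    ∀ h, t.height ≤ h → t.size + 1 ≤ 2 * k ^ h := by
  induction t using ind with
  | h x cs ih =>
    intro h hh
    obtain ⟨hl, hc⟩ := degLE_node.1 ht
    cases h with
    | zero => rw [size_of_height_zero (by omega)]; simp
    | succ h =>
      have h1 : ∀ c ∈ cs, c.size ≤ 2 * k ^ h - 1 := by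
        intro c hcm
        have := ih c hcm (hc c hcm) h (by have := le_height (x := x) hcm; omega)
        omega
      have h2 := sum_le_of_length size hl h1
      have h3 : 1 ≤ k ^ h := Nat.one_le_pow _ _ (by omega)
      have h4 : k * (2 * k ^ h - 1) + k = 2 * k ^ (h + 1) := by
        obtain ⟨m, hm⟩ : ∃ m, 2 * k ^ h = m + 1 := ⟨2 * k ^ h - 1, by omega⟩
        rw [hm, pow_succ]
        have : 2 * (k ^ h * k) = (m + 1) * k := by rw [← hm]; ring
        rw [this, Nat.add_sub_cancel]; ring
      rw [size_node]
      omega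

/-! ### Moving a leaf -/

/-- Deleting a deepest leaf.  The saving is the sum of `n + 1 - 2|w|` over the `h + 2` subtrees
`w` on the path from the root to the leaf; the sizes of those below the root sum to at most
`4 k ^ h`. -/
theorem exists_remove {k : ℕ} (hk : 2 ≤ k) (n : ℤ) : ∀ (h : ℕ) (t : KTree), t.DegLE k →
    t.height = h + 1 → ∃ t' : KTree, t'.DegLE k ∧ t'.size + 1 = t.size ∧
      (∀ d < h + 1, t'.countAt d = t.countAt d) ∧
      cost n t' + (h + 2) * (n + 1) ≤ cost n t + 2 * t.size + 8 * (k : ℤ) ^ h := by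
  intro h
  induction h with
  | zero =>
    rintro ⟨x, cs⟩ ht hh
    obtain ⟨c, hc, hch⟩ := exists_height hh
    have hcs := size_of_height_zero hch
    obtain ⟨l₁, l₂, rfl⟩ := List.append_of_mem hc
    have hsz := size_split x l₁ l₂ c
    refine ⟨node x (l₁ ++ l₂), ?_, by omega, ?_, ?_⟩
    · rw [degLE_node] at ht ⊢
      refine ⟨?_, fun d hd => ht.2 d ?_⟩
      · have := ht.1
        simp only [List.length_append, List.length_cons] at this ⊢
        omega
      · rcases List.mem_append.1 hd with h | h <;> simp [h]
    · intro d hd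
      obtain rfl : d = 0 := by omega
      rw [countAt_zero, countAt_zero]
    · have hcc : cost n c = n - 1 := by
        cases c with
        | node y ds =>
          cases ds with
          | nil => simp [cost_node, hcs]
          | cons e es =>
            have := le_height (x := y) (List.mem_cons_self (a := e) (l := es))
            omega
      rw [cost_split, cost_node, hsz, hcs, hcc]
      push_cast
      nlinarith
  | succ h ih =>
    rintro ⟨x, cs⟩ ht hh
    obtain ⟨c, hc, hch⟩ := exists_height hh
    have hcd := (degLE_node.1 ht).2 c hc
    obtain ⟨c', h1, h2, h3, h4⟩ := ih c hcd hch
    obtain ⟨l₁, l₂, rfl⟩ := List.append_of_mem hc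
    have hsz : (node x (l₁ ++ c' :: l₂)).size + 1 = (node x (l₁ ++ c :: l₂)).size := by
      rw [size_split, size_split]; omega
    refine ⟨node x (l₁ ++ c' :: l₂), degLE_split ht h1, hsz, ?_, ?_⟩
    · intro d hd
      cases d with
      | zero => rw [countAt_zero, countAt_zero]
      | succ d =>
        rw [countAt_succ, countAt_succ]
        simp [h3 d (by omega)]
    · have hcz : ((c.size : ℕ) : ℤ) + 1 ≤ 2 * (k : ℤ) ^ (h + 1) := by
        exact_mod_cast size_le_pow hk hcd (h + 1) hch.le
      have hp : 2 * (k : ℤ) ^ h ≤ (k : ℤ) ^ (h + 1) := by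
        rw [pow_succ, mul_comm]
        exact mul_le_mul_of_nonneg_left (by exact_mod_cast hk) (by positivity)
      rw [cost_split, cost_split, ← hsz]
      push_cast
      nlinarith

/-- If some level `e` is not full, a leaf can be attached at depth at most `e`. -/
theorem exists_add {k : ℕ} {n : ℤ} (hn : 1 ≤ n) : ∀ (e : ℕ) (t : KTree), t.DegLE k →
    t.countAt e < k ^ e → ∃ t' : KTree, t'.DegLE k ∧ t'.size = t.size + 1 ∧
      cost n t' ≤ cost n t + (e + 1) * (n - 1) := by
  intro e
  induction e with
  | zero => intro t _ h; rw [countAt_zero] at h; simp at h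
  | succ e ih =>
    rintro ⟨x, cs⟩ ht hlt
    obtain ⟨hl, hc⟩ := degLE_node.1 ht
    have hz : (0 : ℤ) ≤ (node x cs).size := by positivity
    by_cases hlk : cs.length < k
    · have hleaf : (node 0 []).size = 1 := by simp [size_node]
      have hsz : (node x (node 0 [] :: cs)).size = (node x cs).size + 1 := by
        have := size_split x [] cs (node 0 [])
        rwa [hleaf] at this
      refine ⟨node x (node 0 [] :: cs), ?_, hsz, ?_⟩
      · rw [degLE_node]
        refine ⟨by simpa using hlk, fun c hcm => ?_⟩
        rcases List.mem_cons.1 hcm with rfl | h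
        · exact degLE_node.2 (by simp)
        · exact hc c h
      · have := cost_split n x [] cs (node 0 [])
        rw [List.nil_append] at this
        rw [this, cost_node n x cs, hsz, cost_node n 0 [], hleaf]
        push_cast
        simp only [List.nil_append, List.map_nil, List.sum_nil]
        have he : (0 : ℤ) ≤ (e : ℤ) * (n - 1) := mul_nonneg (by positivity) (by linarith)
        nlinarith
    -- the root is saturated, so some child has a deficient level `e`
    · have hck : ∃ c ∈ cs, c.countAt e < k ^ e := by
        by_contra! hcon
        have h1 : (cs.map (fun c => c.countAt e)).length • k ^ e ≤
            (cs.map (fun c => c.countAt e)).sum :=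
          List.card_nsmul_le_sum _ _ (by simpa using hcon)
        rw [List.length_map, smul_eq_mul, ← countAt_succ x] at h1
        have : cs.length = k := by omega
        rw [this, mul_comm, ← pow_succ] at h1
        omega
      obtain ⟨c, hcm, hce⟩ := hck
      obtain ⟨c', h1, h2, h3⟩ := ih c (hc c hcm) hce
      obtain ⟨l₁, l₂, rfl⟩ := List.append_of_mem hcm
      have hsz : (node x (l₁ ++ c' :: l₂)).size = (node x (l₁ ++ c :: l₂)).size + 1 := by
        rw [size_split, size_split]; omega
      refine ⟨node x (l₁ ++ c' :: l₂), degLE_split ht h1, hsz, ?_⟩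
      rw [cost_split, cost_split, hsz]
      push_cast
      nlinarith

/-- The exchange step: a subtree whose children are weakly complete is weakly complete. -/
theorem weaklyComplete_step {k n : ℕ} (hk : 2 ≤ k) {T : KTree} (hopt : IsOptimal k n T)
    {x : ℕ} {cs : List KTree} (hS : IsSubtreeOf (node x cs) T)
    (hsize : 9 * k * (node x cs).size ≤ T.size) (hch : ∀ c ∈ cs, WeaklyComplete k c) :
    WeaklyComplete k (node x cs) := by
  have hTd := hopt.1.1
  have hd := degLE_of_isSubtreeOf hS hTd
  refine ⟨hd, fun d hdh => ?_⟩
  by_contra hne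
  have hlt : (node x cs).countAt d < k ^ d := lt_of_le_of_ne (countAt_le hd d) hne
  have hd0 : d ≠ 0 := by
    rintro rfl
    rw [countAt_zero] at hne
    simp at hne
  obtain ⟨h, hh⟩ : ∃ h, (node x cs).height = h + 2 := ⟨(node x cs).height - 2, by omega⟩
  obtain ⟨c, hc, hcH⟩ := exists_height (h := h + 1) hh
  -- the level of `c` just above its last one is full
  have hpow : k ^ h + 1 ≤ (node x cs).size := by
    have h1 := (hch c hc).2 h (by omega)
    have h2 := countAt_le_size c h
    obtain ⟨l₁, l₂, rfl⟩ := List.append_of_mem hc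
    have h3 := size_pos (node x (l₁ ++ l₂))
    rw [size_split]
    omega
  have hTpos := size_pos T
  obtain ⟨S₁, a1, a2, a3, a4⟩ := exists_remove hk T.size (h + 1) _ hd hh
  obtain ⟨S₂, b1, b2, b3⟩ := exists_add (n := T.size) (by exact_mod_cast hTpos) d S₁ a1
    (by rw [a3 d (by omega)]; exact hlt)
  have hcost : cost T.size S₂ < cost T.size (node x cs) := by
    have e1 : ((d : ℤ) + 1) * (T.size - 1) ≤ ((h : ℤ) + 2) * (T.size - 1) :=
      mul_le_mul_of_nonneg_right (by norm_cast; omega)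
        (by have : (1 : ℤ) ≤ T.size := by exact_mod_cast hTpos
            linarith)
    have e2 : (k : ℤ) ^ (h + 1) ≤ k * (node x cs).size := by
      rw [pow_succ, mul_comm]
      refine mul_le_mul_of_nonneg_left ?_ (by positivity)
      exact_mod_cast (by omega : k ^ h ≤ (node x cs).size)
    have e3 : (9 : ℤ) * k * (node x cs).size ≤ T.size := by exact_mod_cast hsize
    have e4 : (2 : ℤ) * (node x cs).size ≤ k * (node x cs).size :=
      mul_le_mul_of_nonneg_right (by exact_mod_cast hk) (by positivity)
    push_cast at a4
    nlinarith
  obtain ⟨T', t1, t2, t3⟩ := exists_replace hS hTd b1 (by omega) hcost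
  have := hopt.cost_le t1 t2
  linarith

end KTree

/-- let `T` be an optimal `k`-ary search tree on `n` nodes for the finite
uniform workload (minimizing `Σ_{u≠v} d_T(u,v)` over all `k`-ary search trees on `n`
nodes).  Then every subtree `S` of `T` with `|V(S)| ≤ |V(T)| / (9k)` is a
weakly-complete `k`-ary tree. -/
theorem optimal_small_subtrees_weaklyComplete
    (k n : ℕ) (T : KTree) (hopt : IsOptimal k n T)
    (S : KTree) (hS : IsSubtreeOf S T) (hsize : 9 * k * S.size ≤ T.size) :
    WeaklyComplete k S := by
  have hTd := hopt.1.1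
  by_cases hk : 2 ≤ k
  · induction S using ind with
    | h x cs ih =>
      refine weaklyComplete_step hk hopt hS hsize fun c hc =>
        ih c hc (isSubtreeOf_child hS hc) ?_
      have hle : c.size ≤ (node x cs).size := by
        obtain ⟨l₁, l₂, rfl⟩ := List.append_of_mem hc
        rw [size_split]
        omega
      exact (Nat.mul_le_mul_left _ hle).trans hsize
  -- for `k ≤ 1` every tree is a path
  · have hd := degLE_of_isSubtreeOf hS hTd
    refine ⟨hd, fun d hdh => ?_⟩
    have h1 := countAt_le hd d
    have h2 := countAt_pos S d hdh.le
    have h3 : k ^ d ≤ 1 := pow_le_one₀ (by omega) (by omega)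
    omega
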